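/- Let d be a positive integer with ν₂(d) = 1 (i.e., d ≡ 2 (mod 4)) and let n be a positive integer. Then ν₂(W_d(n)) = 2·s₂(n). -/

import Mathlib

/-- `Wstar d n` is the number of Abelian squares: the sum over all tuples
`(x₁,…,x_d)` of nonnegative integers summing to `n` of the square of the
multinomial coefficient `n!/(x₁!⋯x_d!)`. -/
def Wstar (d n : ℕ) : ℕ :=
  ∑ x ∈ Finset.Nat.antidiagonalTuple d n, (Nat.multinomial Finset.univ x) ^ 2

/-- `W d n` is the number of `2n`-step closed walks at the origin in `ℤ^d`. -/
def W (d n : ℕ) : ℕ := Nat.choose (2 * n) n * Wstar d n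

/-- `s2 n` is the number of ones in the binary expansion of `n`. -/
def s2 (n : ℕ) : ℕ := (Nat.digits 2 n).sum

/-!
The sum `W*_d(n)` is `n!²` times the coefficient of `xⁿ` in `F ^ d`, where `F = ∑ xᵏ / k!²`. Since
`F ^ 2 = ∑ (2k choose k) xᵏ / k!²`, expanding `F ^ (2m) = (F ^ 2) ^ m` gives
`W*_{2m}(n) = ∑ (n! / (y₁!⋯y_m!))² ∏ (2yᵢ choose yᵢ)`, summed over `y₁ + ⋯ + y_m = n`.
If `v` is the 2-adic valuation of the multinomial coefficient `M` of such a `y`, Kummer's theorem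
gives valuation `2v + ∑ s₂(yᵢ) = s₂(n) + 3v` to its term. So modulo `2 ^ (s₂(n) + 1)` the term is
`2 ^ s₂(n) * M`, and by the multinomial theorem `W*_{2m}(n) ≡ 2 ^ s₂(n) * mⁿ`. For odd `m` this
has valuation `s₂(n)`, as does `2n choose n`.
-/

open Finset
open scoped Nat PowerSeries

lemma sum_finsuppAntidiag {ι μ M : Type*} [DecidableEq ι] [AddCommMonoid μ] [HasAntidiagonal μ]
    [DecidableEq μ] [AddCommMonoid M] (s : Finset ι) (n : μ) (g : (ι → μ) → M) :
    ∑ l ∈ finsuppAntidiag s n, g l = ∑ x ∈ piAntidiag s n, g x := by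
  rw [finsuppAntidiag, sum_map, ← sum_attach (piAntidiag s n)]
  rfl

section FactorialGenFun

variable {K : Type*} [Field K]

/-- The generating function `∑ aₖ xᵏ / (k!)ʳ` of a sequence `a`: the ordinary one for `r = 0`, the
exponential one for `r = 1`. Squares of multinomial coefficients are governed by `r = 2`. -/
def factorialGenFun (r : ℕ) (a : ℕ → K) : K⟦X⟧ :=
  PowerSeries.mk fun k => a k / (k ! : K) ^ r

variable [CharZero K]

lemma factorialGenFun_injective (r : ℕ) :
    Function.Injective (factorialGenFun r : (ℕ → K) → K⟦X⟧) := by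
  intro a b h
  funext k
  have hk : (k ! : K) ^ r ≠ 0 := pow_ne_zero r (Nat.cast_ne_zero.2 k.factorial_ne_zero)
  have hcoeff := congrArg (PowerSeries.coeff k) h
  simpa only [factorialGenFun, PowerSeries.coeff_mk, div_left_inj' hk] using hcoeff

lemma prod_div_factorial_pow {ι : Type*} (s : Finset ι) (r : ℕ) (a : ι → ℕ → K) (x : ι → ℕ) :
    ∏ i ∈ s, a i (x i) / ((x i)! : K) ^ r =
      (Nat.multinomial s x : K) ^ r * (∏ i ∈ s, a i (x i)) / ((∑ i ∈ s, x i)! : K) ^ r := by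
  have hM : (Nat.multinomial s x : K) ≠ 0 := Nat.cast_ne_zero.2 (Nat.multinomial_pos s x).ne'
  rw [← Nat.multinomial_spec s x, Nat.cast_mul, Nat.cast_prod, mul_pow, mul_comm (_ ^ r) (_ ^ r),
    mul_div_mul_left _ _ (pow_ne_zero r hM), prod_div_distrib, prod_pow]

lemma prod_factorialGenFun {ι : Type*} [DecidableEq ι] (s : Finset ι) (r : ℕ) (a : ι → ℕ → K) :
    ∏ i ∈ s, factorialGenFun r (a i) =
      factorialGenFun r fun n =>
        ∑ x ∈ piAntidiag s n, (Nat.multinomial s x : K) ^ r * ∏ i ∈ s, a i (x i) := by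
  ext n
  simp only [PowerSeries.coeff_prod, factorialGenFun, PowerSeries.coeff_mk, sum_div]
  rw [sum_finsuppAntidiag s n fun x => ∏ i ∈ s, a i (x i) / ((x i)! : K) ^ r]
  refine sum_congr rfl fun x hx => ?_
  rw [prod_div_factorial_pow, (mem_piAntidiag.1 hx).1]

end FactorialGenFun

lemma Wstar_eq_sum_piAntidiag (d n : ℕ) :
    Wstar d n = ∑ x ∈ piAntidiag (univ : Finset (Fin d)) n, Nat.multinomial univ x ^ 2 := by
  rw [piAntidiag_univ_fin_eq_antidiagonalTuple, Wstar]

lemma factorialGenFun_one_pow (d : ℕ) :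
    factorialGenFun 2 (1 : ℕ → ℚ) ^ d = factorialGenFun 2 fun n => (Wstar d n : ℚ) := by
  simpa [Wstar_eq_sum_piAntidiag] using
    prod_factorialGenFun (univ : Finset (Fin d)) 2 fun _ => (1 : ℕ → ℚ)

lemma Wstar_mul (k m n : ℕ) :
    Wstar (k * m) n =
      ∑ y ∈ piAntidiag (univ : Finset (Fin m)) n,
        Nat.multinomial univ y ^ 2 * ∏ i, Wstar k (y i) := by
  have h := prod_factorialGenFun (univ : Finset (Fin m)) 2 fun _ j => (Wstar k j : ℚ)
  rw [prod_const, card_univ, Fintype.card_fin, ← factorialGenFun_one_pow, ← pow_mul,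
    factorialGenFun_one_pow] at h
  exact_mod_cast congrFun (factorialGenFun_injective 2 h) n

lemma Wstar_two (n : ℕ) : Wstar 2 n = n.centralBinom := by
  rw [Wstar, Nat.antidiagonalTuple_two, sum_map, Nat.centralBinom, ← Nat.sum_range_choose_sq,
    ← Nat.sum_antidiagonal_eq_sum_range_succ fun i _ => n.choose i ^ 2]
  refine sum_congr rfl fun p hp => ?_
  have hmult : Nat.multinomial univ ![p.1, p.2] = n.choose p.1 := by
    rw [Nat.multinomial_univ_two, ← Nat.add_choose, ← Nat.choose_symm_add, mem_antidiagonal.1 hp]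
  exact congrArg (· ^ 2) hmult

lemma padicValNat_finset_prod {ι : Type*} {p : ℕ} [Fact p.Prime] {s : Finset ι} {f : ι → ℕ}
    (hf : ∀ i ∈ s, f i ≠ 0) : padicValNat p (∏ i ∈ s, f i) = ∑ i ∈ s, padicValNat p (f i) := by
  simp only [← Nat.factorization_def _ (Fact.out : p.Prime), Nat.factorization_prod hf,
    Finsupp.finsetSum_apply]

lemma sub_one_mul_padicValNat_factorial_add_sum_digits (p : ℕ) [Fact p.Prime] (n : ℕ) :
    (p - 1) * padicValNat p n ! + (p.digits n).sum = n := by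
  rw [sub_one_mul_padicValNat_factorial, Nat.sub_add_cancel (Nat.digit_sum_le p n)]

lemma sub_one_mul_padicValNat_multinomial_add_sum_digits {ι : Type*} (p : ℕ) [Fact p.Prime]
    (s : Finset ι) (f : ι → ℕ) :
    (p - 1) * padicValNat p (Nat.multinomial s f) + (p.digits (∑ i ∈ s, f i)).sum =
      ∑ i ∈ s, (p.digits (f i)).sum := by
  have hfac : ∀ i ∈ s, (f i)! ≠ 0 := fun i _ => (f i).factorial_ne_zero
  have hsum := sub_one_mul_padicValNat_factorial_add_sum_digits p (∑ i ∈ s, f i)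
  rw [← Nat.multinomial_spec, padicValNat.mul (prod_ne_zero_iff.2 hfac)
    (Nat.multinomial_pos s f).ne', padicValNat_finset_prod hfac, mul_add, mul_sum] at hsum
  have hterms : ∑ i ∈ s, (p - 1) * padicValNat p (f i)! + ∑ i ∈ s, (p.digits (f i)).sum =
      ∑ i ∈ s, f i := by
    simp only [← sum_add_distrib, sub_one_mul_padicValNat_factorial_add_sum_digits]
  omega

lemma padicValNat_two_multinomial_add_s2 {ι : Type*} (s : Finset ι) (f : ι → ℕ) :
    padicValNat 2 (Nat.multinomial s f) + s2 (∑ i ∈ s, f i) = ∑ i ∈ s, s2 (f i) := by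
  simpa only [s2, Nat.add_one_sub_one, one_mul] using
    sub_one_mul_padicValNat_multinomial_add_sum_digits 2 s f

lemma s2_two_mul (n : ℕ) : s2 (2 * n) = s2 n := by
  rcases n.eq_zero_or_pos with rfl | hn
  · rfl
  · rw [s2, Nat.digits_base_mul one_lt_two hn, List.sum_cons, zero_add, s2]

lemma padicValNat_two_centralBinom (n : ℕ) : padicValNat 2 n.centralBinom = s2 n := by
  have hkummer : (2 - 1) * padicValNat 2 ((n + n).choose n) = s2 n + s2 n - s2 (n + n) :=
    sub_one_mul_padicValNat_choose_eq_sub_sum_digits'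
  rw [← two_mul n, s2_two_mul] at hkummer
  rw [Nat.centralBinom]
  omega

lemma two_pow_mul_modEq_two_pow_iff_odd {k c : ℕ} :
    2 ^ k * c ≡ 2 ^ k [MOD 2 ^ (k + 1)] ↔ Odd c := by
  have hcancel : 2 ^ k * c ≡ 2 ^ k * 1 [MOD 2 ^ k * 2] ↔ c ≡ 1 [MOD 2] :=
    Nat.ModEq.mul_left_cancel_iff' (pow_ne_zero k two_ne_zero)
  rwa [mul_one, ← pow_succ, Nat.ModEq, Nat.ModEq, Nat.one_mod, ← Nat.odd_iff] at hcancel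

lemma padicValNat_two_pow_mul_of_odd {k c : ℕ} (hc : Odd c) : padicValNat 2 (2 ^ k * c) = k := by
  rw [padicValNat.mul (pow_ne_zero k two_ne_zero) hc.pos.ne', padicValNat.prime_pow,
    padicValNat.eq_zero_of_not_dvd hc.not_two_dvd_nat, add_zero]

lemma ne_zero_and_padicValNat_two_eq_iff_modEq {a k : ℕ} :
    a ≠ 0 ∧ padicValNat 2 a = k ↔ a ≡ 2 ^ k [MOD 2 ^ (k + 1)] := by
  constructor
  · rintro ⟨ha, rfl⟩
    obtain ⟨k, c, hc, rfl⟩ := Nat.exists_eq_two_pow_mul_odd ha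
    rw [padicValNat_two_pow_mul_of_odd hc]
    exact two_pow_mul_modEq_two_pow_iff_odd.2 hc
  · intro h
    obtain ⟨c, rfl⟩ : 2 ^ k ∣ a := (h.dvd_iff (pow_dvd_pow 2 k.le_succ)).2 dvd_rfl
    have hc : Odd c := two_pow_mul_modEq_two_pow_iff_odd.1 h
    exact ⟨mul_ne_zero (pow_ne_zero k two_ne_zero) hc.pos.ne', padicValNat_two_pow_mul_of_odd hc⟩

lemma multinomial_sq_mul_prod_centralBinom_modEq {ι : Type*} (s : Finset ι) (y : ι → ℕ) :
    Nat.multinomial s y ^ 2 * ∏ i ∈ s, (y i).centralBinom ≡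
      2 ^ s2 (∑ i ∈ s, y i) * Nat.multinomial s y [MOD 2 ^ (s2 (∑ i ∈ s, y i) + 1)] := by
  set M := Nat.multinomial s y
  set T := M ^ 2 * ∏ i ∈ s, (y i).centralBinom
  set S := s2 (∑ i ∈ s, y i)
  have hM : M ≠ 0 := (Nat.multinomial_pos s y).ne'
  have hcentral : ∀ i ∈ s, (y i).centralBinom ≠ 0 := fun i _ => (y i).centralBinom_ne_zero
  have hT : T ≠ 0 := mul_ne_zero (pow_ne_zero 2 hM) (prod_ne_zero_iff.2 hcentral)
  have hvalT : padicValNat 2 T = S + 3 * padicValNat 2 M := by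
    have hkummer : padicValNat 2 M + S = ∑ i ∈ s, s2 (y i) := padicValNat_two_multinomial_add_s2 s y
    simp only [T, padicValNat.mul (pow_ne_zero 2 hM) (prod_ne_zero_iff.2 hcentral),
      padicValNat.pow, padicValNat_finset_prod hcentral, padicValNat_two_centralBinom, ← hkummer]
    ring
  rcases M.even_or_odd with heven | hodd
  · have hvalM : 1 ≤ padicValNat 2 M := one_le_padicValNat_of_dvd hM heven.two_dvd
    have hdvdT : 2 ^ (S + 1) ∣ T := (padicValNat_dvd_iff_le hT).2 (by omega)
    have hdvdM : 2 ^ (S + 1) ∣ 2 ^ S * M := mul_dvd_mul_left (2 ^ S) heven.two_dvd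
    exact hdvdT.modEq_zero_nat.trans hdvdM.modEq_zero_nat.symm
  · have hvalM : padicValNat 2 M = 0 := padicValNat.eq_zero_of_not_dvd hodd.not_two_dvd_nat
    have hT2 : T ≡ 2 ^ S [MOD 2 ^ (S + 1)] :=
      ne_zero_and_padicValNat_two_eq_iff_modEq.1 ⟨hT, by omega⟩
    exact hT2.trans (two_pow_mul_modEq_two_pow_iff_odd.2 hodd).symm

lemma Wstar_two_mul_modEq (m n : ℕ) :
    Wstar (2 * m) n ≡ 2 ^ s2 n * m ^ n [MOD 2 ^ (s2 n + 1)] := by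
  have hpow : m ^ n = ∑ y ∈ piAntidiag (univ : Finset (Fin m)) n, Nat.multinomial univ y := by
    simpa using sum_pow_eq_sum_piAntidiag (univ : Finset (Fin m)) (fun _ => (1 : ℕ)) n
  rw [Wstar_mul, hpow, mul_sum]
  refine Nat.ModEq.sum fun y hy => ?_
  have hn : ∑ i, y i = n := (mem_piAntidiag.1 hy).1
  simpa only [Wstar_two, hn] using multinomial_sq_mul_prod_centralBinom_modEq univ y

lemma Wstar_two_mul_ne_zero_and_padicValNat {m : ℕ} (hm : Odd m) (n : ℕ) :
    Wstar (2 * m) n ≠ 0 ∧ padicValNat 2 (Wstar (2 * m) n) = s2 n :=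
  ne_zero_and_padicValNat_two_eq_iff_modEq.2 <|
    (Wstar_two_mul_modEq m n).trans (two_pow_mul_modEq_two_pow_iff_odd.2 hm.pow)

theorem stmt_1 (d n : ℕ) (hd : 0 < d) (hd2 : padicValNat 2 d = 1) (hn : 0 < n) :
    padicValNat 2 (W d n) = 2 * s2 n := by
  obtain ⟨k, m, hm, rfl⟩ := Nat.exists_eq_two_pow_mul_odd hd.ne'
  obtain rfl : k = 1 := (padicValNat_two_pow_mul_of_odd hm).symm.trans hd2
  rw [pow_one]
  obtain ⟨hW, hval⟩ := Wstar_two_mul_ne_zero_and_padicValNat hm n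
  rw [W, ← Nat.centralBinom, padicValNat.mul n.centralBinom_ne_zero hW,
    padicValNat_two_centralBinom, hval, two_mul]
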